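/- Let δ be an increment function of size n, P a Dyck word of size n with a valley d u_i, C_i the δ-excursion of u_i in P, and Q the δ-rotation of P at u_i. Then for every j such that u_j lies in C_i one has h_j(Q) = h_j(P) − 1, and h_j(Q) = h_j(P) for all other j. Furthermore, if there exists j such that the δ-excursion of u_j in P ends with the down step of the valley d u_i, then ℓ_j(Q;δ) = ℓ_j(P;δ) + ℓ_i(P;δ), and for all other j one has ℓ_j(Q;δ) = ℓ_j(P;δ). -/

import Mathlib

/-!
Common definitions.  A letter of a word is a `Bool`: `true` is an up step `u`,
`false` is a down step `d`.  Positions in words are 0-based.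
-/

/-- A (possibly empty) Dyck word: as many `u`'s as `d`'s, and every
prefix has at least as many `u`'s as `d`'s. -/
def IsDyckPath (w : List Bool) : Prop :=
  w.count true = w.count false ∧ ∀ p, p <+: w → p.count false ≤ p.count true

/-- A Dyck word of size `n`: `n` up steps, `n` down steps, every prefix has
at least as many `u`'s as `d`'s. -/
def IsDyckWord (n : ℕ) (w : List Bool) : Prop :=
  w.count true = n ∧ w.count false = n ∧ ∀ p, p <+: w → p.count false ≤ p.count true

/-- The set of Dyck words of size `n`. -/
def DyckSet (n : ℕ) : Set (List Bool) := {w | IsDyckWord n w}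

/-- An increment function: a `{0,1}`-valued function (the paper's `δ : {1,…,n} → {0,1}`;
only the values on `{1,…,n}` are ever used). -/
def IsIncFun (δ : ℕ → ℤ) : Prop := ∀ i, δ i = 0 ∨ δ i = 1

/-- The 0-based position in `w` of the `i`-th up step `u_i` (`i` is 1-based). -/
def upPos (w : List Bool) (i : ℕ) : ℕ :=
  ((List.range w.length).filter fun q => w.getD q false = true).getD (i - 1) 0

/-- `h_i(w)`: the (1-based, between 1 and 2n) position of the up step `u_i` in `w`. -/
def hpos (w : List Bool) (i : ℕ) : ℕ := upPos w i + 1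

/-- The change of δ-altitude produced by the letter at position `q` of `w`:
the up step `u_i` contributes `δ i`, a down step contributes `-1`. -/
def stepVal (δ : ℕ → ℤ) (w : List Bool) (q : ℕ) : ℤ :=
  if w.getD q false = true then δ ((w.take (q + 1)).count true) else -1

/-- The δ-elevation of the factor of `w` occupying positions `a, …, b-1`. -/
def elev (δ : ℕ → ℤ) (w : List Bool) (a b : ℕ) : ℤ :=
  ∑ q ∈ Finset.Ico a b, stepVal δ w q

/-- `C` is the δ-excursion of the up step of `w` at position `p`:
the smallest (nonempty) factor of `w` starting at `p` whose δ-elevation is `0`. -/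
def IsDeltaExcAt (δ : ℕ → ℤ) (w : List Bool) (p : ℕ) (C : List Bool) : Prop :=
  w.getD p false = true ∧
  ∃ m, 0 < m ∧ p + m ≤ w.length ∧ C = (w.drop p).take m ∧
    elev δ w p (p + m) = 0 ∧ ∀ m', 0 < m' → m' < m → elev δ w p (p + m') ≠ 0

/-- `C` is the excursion of the up step of `w` at position `p`: the smallest factor
of `w` starting at `p` that is itself a Dyck word. -/
def IsExcursionAt (w : List Bool) (p : ℕ) (C : List Bool) : Prop :=
  w.getD p false = true ∧
  ∃ m, 0 < m ∧ p + m ≤ w.length ∧ C = (w.drop p).take m ∧ IsDyckPath C ∧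
    ∀ m', 0 < m' → m' < m → ¬ IsDyckPath ((w.drop p).take m')

/-- `ℓ_i(w; δ)`: the length of the δ-excursion of `u_i` in `w`. -/
noncomputable def excLen (δ : ℕ → ℤ) (w : List Bool) (i : ℕ) : ℕ :=
  sInf {m | 0 < m ∧ elev δ w (upPos w i) (upPos w i + m) = 0}

/-- `Q` is the δ-rotation of `P` at some up step: `P = A d C B` with `d u_i` a valley
and `C` the δ-excursion of `u_i`, and `Q = A C d B`. -/
def DeltaRot (δ : ℕ → ℤ) (P Q : List Bool) : Prop :=
  ∃ A C B, P = A ++ false :: (C ++ B) ∧ Q = A ++ (C ++ false :: B) ∧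
    IsDeltaExcAt δ P (A.length + 1) C

/-- The alt-Tamari order `Tam^δ`: reflexive transitive closure of δ-rotations. -/
def altLE (δ : ℕ → ℤ) : List Bool → List Bool → Prop :=
  Relation.ReflTransGen (DeltaRot δ)

/-- The Tamari order: the alt-Tamari order for `δ ≡ 1` (the δ-excursion of any up step
is then its excursion). -/
def tamLE : List Bool → List Bool → Prop := altLE fun _ => 1

/-- The height (number of `u`'s minus number of `d`'s) of the length-`j` prefix of `w`. -/
def prefHeight (w : List Bool) (j : ℕ) : ℤ :=
  ((w.take j).count true : ℤ) - ((w.take j).count false : ℤ)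

/-- The Dyck (inclusion) order: every prefix height of `P` is at most that of `Q`. -/
def dyckLE (P Q : List Bool) : Prop := ∀ j, prefHeight P j ≤ prefHeight Q j

/-- Strict version of a relation `le`. -/
def ltOf (le : List Bool → List Bool → Prop) (P Q : List Bool) : Prop :=
  le P Q ∧ ¬ le Q P

/-- There is a strict chain `P = c 0 < c 1 < ⋯ < c k = Q` inside `S`. -/
def HasChainIn (S : Set (List Bool)) (le : List Bool → List Bool → Prop)
    (P Q : List Bool) (k : ℕ) : Prop :=
  ∃ c : ℕ → List Bool, c 0 = P ∧ c k = Q ∧ (∀ i ≤ k, c i ∈ S) ∧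
    ∀ i < k, ltOf le (c i) (c (i + 1))

/-- The interval `[P,Q]` of the poset `(S, le)` has height `k`: `k` is the maximal
length of a chain from `P` to `Q`. -/
def IntervalHeight (S : Set (List Bool)) (le : List Bool → List Bool → Prop)
    (P Q : List Bool) (k : ℕ) : Prop :=
  HasChainIn S le P Q k ∧ ∀ m, HasChainIn S le P Q m → m ≤ k

/-- The interval `[P,Q]` of the poset `(S, le)` is linear: it is totally ordered. -/
def LinearInterval (S : Set (List Bool)) (le : List Bool → List Bool → Prop)
    (P Q : List Bool) : Prop :=
  P ∈ S ∧ Q ∈ S ∧ le P Q ∧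
  ∀ R R', R ∈ S → R' ∈ S → le P R → le R Q → le P R' → le R' Q → le R R' ∨ le R' R

/-- `Q` covers `P` in the poset `(S, le)`. -/
def CovIn (S : Set (List Bool)) (le : List Bool → List Bool → Prop)
    (P Q : List Bool) : Prop :=
  P ∈ S ∧ Q ∈ S ∧ ltOf le P Q ∧ ∀ R ∈ S, ¬ (ltOf le P R ∧ ltOf le R Q)

/-- The number of valleys (factors `du`) of `w`. -/
def valleys (w : List Bool) : ℕ :=
  ((List.range w.length).filter fun q => !w.getD q true && w.getD (q + 1) false).length

/-- The δ-altitude of `w` before position `k`. -/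
def altitude (δ : ℕ → ℤ) (w : List Bool) (k : ℕ) : ℤ :=
  ∑ q ∈ Finset.range k, stepVal δ w q

lemma altitude_succ (δ : ℕ → ℤ) (w : List Bool) (k : ℕ) :
    altitude δ w (k + 1) = altitude δ w k + stepVal δ w k :=
  Finset.sum_range_succ _ _

lemma elev_eq_altitude_sub (δ : ℕ → ℤ) (w : List Bool) (a m : ℕ) :
    elev δ w a (a + m) = altitude δ w (a + m) - altitude δ w a :=
  Finset.sum_Ico_eq_sub _ (Nat.le_add_right a m)

lemma filter_range_getD_count (p : ℕ → Prop) [DecidablePred p] {q N : ℕ} (hqN : q < N)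
    (hq : p q) : ((List.range N).filter fun x => p x).getD (Nat.count p q) 0 = q := by
  have hlen : ∀ M, ((List.range M).filter fun x => p x).length = Nat.count p M := by
    intro M
    rw [Nat.count, List.countP_eq_length_filter]
  induction N with
  | zero => omega
  | succ N ih =>
    rw [List.range_succ, List.filter_append]
    rcases Nat.lt_succ_iff_lt_or_eq.mp hqN with h | rfl
    · rw [List.getD_append _ _ _ _ (by rw [hlen]; exact Nat.count_strict_mono hq h)]
      exact ih h
    · rw [List.getD_append_right _ _ _ _ (by rw [hlen]), hlen]
      simp [hq]

lemma count_take_eq (w : List Bool) (k : ℕ) :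
    (w.take k).count true = Nat.count (fun q => w.getD q false = true) k := by
  induction k with
  | zero => simp
  | succ k ih =>
    rw [Nat.count_succ, ← ih, List.take_add_one, List.count_append]
    congr 1
    by_cases hk : k < w.length
    · cases h : w[k] <;> simp [hk, h]
    · simp [hk]

lemma lt_length_of_getD {w : List Bool} {q : ℕ} (hq : w.getD q false = true) :
    q < w.length := by
  by_contra h
  rw [List.getD_eq_default _ _ (not_lt.mp h)] at hq
  exact Bool.false_ne_true hq

lemma upPos_eq {w : List Bool} {q j : ℕ} (hq : w.getD q false = true)
    (hj : (w.take (q + 1)).count true = j) : upPos w j = q := by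
  have hlt := lt_length_of_getD hq
  have := filter_range_getD_count (fun q => w.getD q false = true) hlt hq
  rw [count_take_eq, Nat.count_succ, if_pos hq] at hj
  rw [upPos, ← hj, Nat.add_sub_cancel]
  exact this

lemma exists_upStep {w : List Bool} {j : ℕ} (hj1 : 1 ≤ j) (hj : j ≤ w.count true) :
    ∃ q, w.getD q false = true ∧ (w.take (q + 1)).count true = j := by
  have h : ∃ k, j ≤ (w.take k).count true := ⟨w.length, by simpa using hj⟩
  classical
  obtain ⟨q, hq⟩ : ∃ q, Nat.find h = q + 1 := by
    refine Nat.exists_eq_succ_of_ne_zero fun h0 => ?_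
    have := Nat.find_spec h
    rw [h0] at this
    simp at this
    omega
  have hs := Nat.find_spec h
  have hm := Nat.find_min h (m := q) (by omega)
  rw [hq] at hs
  refine ⟨q, ?_⟩
  simp only [count_take_eq, Nat.count_succ] at hs hm ⊢
  split_ifs at hs ⊢ with hw
  · exact ⟨hw, by omega⟩
  · omega

lemma upPos_spec {w : List Bool} {j : ℕ} (hj1 : 1 ≤ j) (hj : j ≤ w.count true) :
    w.getD (upPos w j) false = true ∧ (w.take (upPos w j + 1)).count true = j := by
  obtain ⟨q, hq, hc⟩ := exists_upStep hj1 hj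
  rw [upPos_eq hq hc]
  exact ⟨hq, hc⟩

/-- A downward-skip-free integer sequence that does not decrease right after `a` and later
is at most its value at `a` returns to that value, staying strictly above before. -/
lemma exists_first_return {f : ℕ → ℤ} {a : ℕ} (hstep : ∀ k, f k - 1 ≤ f (k + 1))
    (h1 : f a ≤ f (a + 1)) (hex : ∃ L, 0 < L ∧ f (a + L) ≤ f a) :
    ∃ L, 0 < L ∧ f (a + L) = f a ∧ ∀ k, 0 < k → k < L → f a < f (a + k) := by
  classical
  obtain ⟨hpos, hle⟩ := Nat.find_spec hex
  have hmin : ∀ k, 0 < k → k < Nat.find hex → f a < f (a + k) := fun k hk hlt =>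
    not_le.mp fun h => Nat.find_min hex hlt ⟨hk, h⟩
  refine ⟨Nat.find hex, hpos, le_antisymm hle ?_, hmin⟩
  obtain ⟨r, hr⟩ := Nat.exists_eq_succ_of_ne_zero hpos.ne'
  rw [hr]
  rcases Nat.eq_zero_or_pos r with rfl | hr0
  · exact h1
  · have h2 := hmin r hr0 (by omega)
    have h3 := hstep (a + r)
    rw [Nat.succ_eq_add_one, ← Nat.add_assoc]
    omega

lemma stepVal_ge {δ : ℕ → ℤ} (hδ : IsIncFun δ) (w : List Bool) (q : ℕ) :
    -1 ≤ stepVal δ w q := by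
  unfold stepVal
  split_ifs
  · rcases hδ ((w.take (q + 1)).count true) with h | h <;> omega
  · exact le_rfl

lemma stepVal_nonneg {δ : ℕ → ℤ} (hδ : IsIncFun δ) {w : List Bool} {q : ℕ}
    (hq : w.getD q false = true) : 0 ≤ stepVal δ w q := by
  rw [stepVal, if_pos hq]
  rcases hδ ((w.take (q + 1)).count true) with h | h <;> omega

lemma altitude_length_add (δ : ℕ → ℤ) (w : List Bool) (k : ℕ) :
    altitude δ w (w.length + k) = altitude δ w w.length - k := by
  induction k with
  | zero => simp
  | succ k ih =>
    rw [← Nat.add_assoc, altitude_succ, ih, stepVal,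
      List.getD_eq_default _ _ (Nat.le_add_right _ _)]
    rw [if_neg Bool.false_ne_true]
    push_cast
    ring

lemma excLen_eq {δ : ℕ → ℤ} {w : List Bool} {i L : ℕ} (hL : 0 < L)
    (heq : altitude δ w (upPos w i + L) = altitude δ w (upPos w i))
    (hmin : ∀ k, 0 < k → k < L →
      altitude δ w (upPos w i + k) ≠ altitude δ w (upPos w i)) :
    excLen δ w i = L := by
  refine IsLeast.csInf_eq ⟨⟨hL, by rw [elev_eq_altitude_sub, heq, sub_self]⟩, ?_⟩
  rintro k ⟨hk, h⟩
  rw [elev_eq_altitude_sub, sub_eq_zero] at h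
  exact not_lt.mp fun hlt => hmin k hk hlt h

lemma excLen_spec {δ : ℕ → ℤ} (hδ : IsIncFun δ) {w : List Bool} {i : ℕ}
    (hi : w.getD (upPos w i) false = true) :
    0 < excLen δ w i ∧
    altitude δ w (upPos w i + excLen δ w i) = altitude δ w (upPos w i) ∧
    ∀ k, 0 < k → k < excLen δ w i →
      altitude δ w (upPos w i) < altitude δ w (upPos w i + k) := by
  have hlt := lt_length_of_getD hi
  obtain ⟨L, hL, heq, hmin⟩ := exists_first_return (f := altitude δ w) (a := upPos w i)
    (fun k => by have := stepVal_ge hδ w k; rw [altitude_succ]; omega)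
    (by have := stepVal_nonneg hδ hi; rw [altitude_succ]; omega)
    ⟨w.length - upPos w i + (altitude δ w w.length - altitude δ w (upPos w i)).natAbs,
      by omega, by
        rw [← Nat.add_assoc, Nat.add_sub_cancel' hlt.le, altitude_length_add]
        omega⟩
  rw [excLen_eq hL heq fun k h0 hk => (hmin k h0 hk).ne']
  exact ⟨hL, heq, hmin⟩

section Rotation

variable {P Q : List Bool} {t m : ℕ}

/-- `Q` arises from `P` by moving the down step at position `t` to the right, past the `m`
letters that follow it. -/
structure MovesDown (P Q : List Bool) (t m : ℕ) : Prop where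
  down : P.getD t false = false
  before : ∀ q < t, Q.getD q false = P.getD q false
  inside : ∀ q < m, Q.getD (t + q) false = P.getD (t + 1 + q) false
  moved : Q.getD (t + m) false = false
  after : ∀ q, Q.getD (t + 1 + m + q) false = P.getD (t + 1 + m + q) false

lemma movesDown_append (A C B : List Bool) :
    MovesDown (A ++ false :: (C ++ B)) (A ++ (C ++ false :: B)) A.length C.length where
  down := by simp
  before q hq := by rw [List.getD_append _ _ _ _ hq, List.getD_append _ _ _ _ hq]
  inside q hq := by
    have h : (A ++ false :: (C ++ B)).getD (A.length + 1 + q) false = C.getD q false := by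
      rw [List.getD_append_right _ _ _ _ (by omega),
        show A.length + 1 + q - A.length = q + 1 by omega, List.getD_cons_succ,
        List.getD_append _ _ _ _ hq]
    rw [h, List.getD_append_right _ _ _ _ (by omega), Nat.add_sub_cancel_left,
      List.getD_append _ _ _ _ hq]
  moved := by simp
  after q := by
    have h : (A ++ false :: (C ++ B)).getD (A.length + 1 + C.length + q) false =
        B.getD q false := by
      rw [List.getD_append_right _ _ _ _ (by omega),
        show A.length + 1 + C.length + q - A.length = C.length + q + 1 by omega,
        List.getD_cons_succ, List.getD_append_right _ _ _ _ (by omega), Nat.add_sub_cancel_left]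
    rw [h, List.getD_append_right _ _ _ _ (by omega), List.getD_append_right _ _ _ _ (by omega),
      show A.length + 1 + C.length + q - A.length - C.length = q + 1 by omega,
      List.getD_cons_succ]

namespace MovesDown

lemma count_before (h : MovesDown P Q t m) {k : ℕ} (hk : k ≤ t) :
    (Q.take k).count true = (P.take k).count true := by
  induction k with
  | zero => simp
  | succ k ih =>
    have := ih (by omega)
    simp only [count_take_eq, Nat.count_succ, h.before k (by omega)] at this ⊢
    rw [this]

lemma count_inside (h : MovesDown P Q t m) {k : ℕ} (hk : k ≤ m) :
    (Q.take (t + k)).count true = (P.take (t + 1 + k)).count true := by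
  induction k with
  | zero =>
    have := h.count_before le_rfl
    simp only [count_take_eq, Nat.add_zero, Nat.count_succ, h.down] at this ⊢
    simpa using this
  | succ k ih =>
    have := ih (by omega)
    simp only [count_take_eq, ← Nat.add_assoc, Nat.count_succ, h.inside k (by omega)] at this ⊢
    rw [this]

lemma count_after (h : MovesDown P Q t m) (k : ℕ) :
    (Q.take (t + 1 + m + k)).count true = (P.take (t + 1 + m + k)).count true := by
  induction k with
  | zero =>
    have := h.count_inside le_rfl
    simp only [count_take_eq] at this
    rw [count_take_eq, count_take_eq, Nat.add_zero, ← this, Nat.add_right_comm, Nat.count_succ,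
      h.moved]
    simp
  | succ k ih =>
    simp only [count_take_eq, ← Nat.add_assoc, Nat.count_succ, h.after k] at ih ⊢
    rw [ih]

variable {δ : ℕ → ℤ}

lemma altitude_before (h : MovesDown P Q t m) {k : ℕ} (hk : k ≤ t) :
    altitude δ Q k = altitude δ P k := by
  induction k with
  | zero => rfl
  | succ k ih =>
    rw [altitude_succ, altitude_succ, ih (by omega), stepVal, stepVal, h.before k (by omega),
      h.count_before hk]

lemma altitude_down (h : MovesDown P Q t m) :
    altitude δ P (t + 1) = altitude δ P t - 1 := by
  rw [altitude_succ, stepVal, h.down]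
  simp [sub_eq_add_neg]

lemma altitude_inside (h : MovesDown P Q t m) {k : ℕ} (hk : k ≤ m) :
    altitude δ Q (t + k) = altitude δ P (t + 1 + k) + 1 := by
  induction k with
  | zero =>
    rw [Nat.add_zero, Nat.add_zero, h.altitude_before le_rfl, h.altitude_down]
    ring
  | succ k ih =>
    have hc := h.count_inside hk
    rw [← Nat.add_assoc, ← Nat.add_assoc] at hc ⊢
    rw [altitude_succ, altitude_succ, ih (by omega), stepVal, stepVal, h.inside k (by omega), hc]
    ring

lemma altitude_after (h : MovesDown P Q t m) {k : ℕ} (hk : t + 1 + m ≤ k) :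
    altitude δ Q k = altitude δ P k := by
  obtain ⟨k, rfl⟩ := Nat.exists_eq_add_of_le hk
  clear hk
  induction k with
  | zero =>
    have := h.altitude_inside (δ := δ) le_rfl
    rw [Nat.add_zero, Nat.add_right_comm, altitude_succ, stepVal, h.moved, this,
      Nat.add_right_comm]
    simp
  | succ k ih =>
    have hc := h.count_after (k + 1)
    rw [← Nat.add_assoc] at hc ⊢
    rw [altitude_succ, altitude_succ, ih, stepVal, stepVal, h.after k, hc]

lemma upPos_inside (h : MovesDown P Q t m) {j : ℕ} (hj1 : 1 ≤ j) (hj : j ≤ P.count true)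
    (hlo : t + 1 ≤ upPos P j) (hhi : upPos P j < t + 1 + m) :
    upPos Q j + 1 = upPos P j := by
  obtain ⟨hup, hc⟩ := upPos_spec hj1 hj
  obtain ⟨k, hk⟩ := Nat.exists_eq_add_of_le hlo
  have hkm : k < m := by omega
  have hci := h.count_inside (k := k + 1) (by omega)
  rw [hk] at hup hc
  rw [hk, upPos_eq (q := t + k) (by rw [h.inside k hkm, hup]) (hci.trans hc)]
  omega

lemma upPos_outside (h : MovesDown P Q t m) {j : ℕ} (hj1 : 1 ≤ j) (hj : j ≤ P.count true)
    (hout : ¬ (t + 1 ≤ upPos P j ∧ upPos P j < t + 1 + m)) :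
    upPos Q j = upPos P j := by
  obtain ⟨hup, hc⟩ := upPos_spec hj1 hj
  have hne : upPos P j ≠ t := by
    rintro heq
    rw [heq, h.down] at hup
    exact Bool.false_ne_true hup
  rcases Nat.lt_or_ge (upPos P j) t with hlt | hge
  · exact upPos_eq (by rw [h.before _ hlt, hup]) (by rw [h.count_before (by omega), hc])
  · obtain ⟨k, hk⟩ := Nat.exists_eq_add_of_le (show t + 1 + m ≤ upPos P j by omega)
    rw [hk] at hup hc ⊢
    exact upPos_eq (by rw [h.after, hup]) ((h.count_after (k + 1)).trans hc)

lemma excLen_extended (h : MovesDown P Q t m) (hδ : IsIncFun δ)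
    (hret : altitude δ P (t + 1 + m) = altitude δ P (t + 1))
    (habove : ∀ k ≤ m, altitude δ P (t + 1) ≤ altitude δ P (t + 1 + k))
    {j : ℕ} (hj1 : 1 ≤ j) (hj : j ≤ P.count true)
    (hend : upPos P j + excLen δ P j = t + 1) :
    excLen δ Q j = excLen δ P j + m := by
  obtain ⟨hL, heq, hmin⟩ := excLen_spec hδ (upPos_spec hj1 hj).1
  have hpos := h.upPos_outside hj1 hj (by omega)
  have hbase := h.altitude_before (δ := δ) (k := upPos P j) (by omega)
  rw [hend] at heq
  refine excLen_eq (by omega) ?_ fun k h0 hk => ?_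
  · rw [hpos, ← Nat.add_assoc, hend, hbase, h.altitude_after le_rfl, hret, heq]
  · rw [hpos, hbase]
    rcases Nat.lt_or_ge (upPos P j + k) t with hlt | hge
    · rw [h.altitude_before hlt.le]
      exact (hmin k h0 (by omega)).ne'
    · obtain ⟨r, hr⟩ := Nat.exists_eq_add_of_le hge
      have := habove r (by omega)
      rw [hr, h.altitude_inside (by omega)]
      omega

lemma excLen_unchanged (h : MovesDown P Q t m) (hδ : IsIncFun δ)
    (hret : altitude δ P (t + 1 + m) = altitude δ P (t + 1))
    (habove : ∀ k ≤ m, altitude δ P (t + 1) ≤ altitude δ P (t + 1 + k))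
    {j : ℕ} (hj1 : 1 ≤ j) (hj : j ≤ P.count true)
    (hend : upPos P j + excLen δ P j ≠ t + 1) :
    excLen δ Q j = excLen δ P j := by
  have hup := (upPos_spec hj1 hj).1
  obtain ⟨hL, heq, hmin⟩ := excLen_spec hδ hup
  have hne : upPos P j ≠ t := by
    rintro heq
    rw [heq, h.down] at hup
    exact Bool.false_ne_true hup
  by_cases hin : t + 1 ≤ upPos P j ∧ upPos P j < t + 1 + m
  · have hpos := h.upPos_inside hj1 hj hin.1 hin.2
    obtain ⟨r, hr⟩ := Nat.exists_eq_add_of_le hin.1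
    have hposQ : upPos Q j = t + r := by omega
    rw [hr] at heq hmin
    have hLm : r + excLen δ P j ≤ m := by
      by_contra hlt
      have h1 := hmin (m - r) (by omega) (by omega)
      rw [Nat.add_assoc (t + 1), Nat.add_sub_cancel' (by omega), hret] at h1
      exact absurd (habove r (by omega)) (not_le.mpr h1)
    refine excLen_eq hL ?_ fun k h0 hk => ?_
    · rw [hposQ, Nat.add_assoc, h.altitude_inside hLm, h.altitude_inside (by omega),
        ← Nat.add_assoc, heq]
    · have := hmin k h0 hk
      rw [hposQ, Nat.add_assoc, h.altitude_inside (by omega), h.altitude_inside (by omega),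
        ← Nat.add_assoc]
      omega
  · have hpos := h.upPos_outside hj1 hj hin
    rcases Nat.lt_or_ge (upPos P j) t with hlt | hge
    · have hbase := h.altitude_before (δ := δ) hlt.le
      rcases Nat.lt_or_gt_of_ne hend with hshort | hlong
      · refine excLen_eq hL ?_ fun k h0 hk => ?_
        · rw [hpos, hbase, h.altitude_before (by omega), heq]
        · rw [hpos, hbase, h.altitude_before (by omega)]
          exact (hmin k h0 hk).ne'
      · have hlow : altitude δ P (upPos P j) < altitude δ P (t + 1) := by
          have := hmin (t + 1 - upPos P j) (by omega) (by omega)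
          rwa [Nat.add_sub_cancel' (by omega)] at this
        have hLm : t + 1 + m < upPos P j + excLen δ P j := by
          by_contra hle
          obtain ⟨r, hr⟩ := Nat.exists_eq_add_of_le hlong.le
          have := habove r (by omega)
          rw [← hr, heq] at this
          omega
        refine excLen_eq hL ?_ fun k h0 hk => ?_
        · rw [hpos, hbase, h.altitude_after hLm.le, heq]
        · rw [hpos, hbase]
          rcases Nat.lt_or_ge (upPos P j + k) t with hkt | hkt
          · rw [h.altitude_before hkt.le]
            exact (hmin k h0 hk).ne'
          · obtain ⟨r, hr⟩ := Nat.exists_eq_add_of_le hkt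
            rcases Nat.lt_or_ge m r with hrm | hrm
            · rw [h.altitude_after (by omega)]
              exact (hmin k h0 hk).ne'
            · have := habove r hrm
              rw [hr, h.altitude_inside hrm]
              omega
    · have hafter : ∀ k, altitude δ Q (upPos P j + k) = altitude δ P (upPos P j + k) :=
        fun k => h.altitude_after (by omega)
      have hbase := hafter 0
      rw [Nat.add_zero] at hbase
      refine excLen_eq hL ?_ fun k h0 hk => ?_
      · rw [hpos, hbase, hafter, heq]
      · rw [hpos, hbase, hafter]
        exact (hmin k h0 hk).ne'

end MovesDown

end Rotation

/-- effect of the δ-rotation at a valley `d u_i` on the positions `h_j`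
and the δ-excursion lengths `ℓ_j`. -/
theorem stmt8 (n : ℕ) (δ : ℕ → ℤ) (hδ : IsIncFun δ) (P Q C : List Bool)
    (hP : IsDyckWord n P) (hQ : IsDyckWord n Q) (i : ℕ) (hi1 : 1 ≤ i) (hin : i ≤ n)
    (hvalley : 1 ≤ upPos P i ∧ P.getD (upPos P i - 1) true = false)
    (hC : IsDeltaExcAt δ P (upPos P i) C)
    (hQdef : Q = P.take (upPos P i - 1) ++ (C ++ false :: P.drop (upPos P i + C.length))) :
    (∀ j, 1 ≤ j → j ≤ n →
      ((upPos P i ≤ upPos P j ∧ upPos P j < upPos P i + C.length →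
          hpos Q j = hpos P j - 1) ∧
        (¬ (upPos P i ≤ upPos P j ∧ upPos P j < upPos P i + C.length) →
          hpos Q j = hpos P j))) ∧
    (∀ j, 1 ≤ j → j ≤ n →
      ((upPos P j + excLen δ P j = upPos P i →
          excLen δ Q j = excLen δ P j + excLen δ P i) ∧
        (upPos P j + excLen δ P j ≠ upPos P i →
          excLen δ Q j = excLen δ P j))) := by
  obtain ⟨hup, m, hm0, hmlen, rfl, hzero, hmin⟩ := hC
  have hlen : ((P.drop (upPos P i)).take m).length = m := by
    rw [List.length_take, List.length_drop]
    omega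
  have hexc : excLen δ P i = m := excLen_eq hm0
    (by rwa [elev_eq_altitude_sub, sub_eq_zero] at hzero)
    (fun k h0 hk => by simpa [elev_eq_altitude_sub, sub_eq_zero] using hmin k h0 hk)
  obtain ⟨-, hret, habove⟩ := excLen_spec hδ hup
  rw [hexc] at hret habove ⊢
  rw [hlen] at hQdef ⊢
  obtain ⟨hv1, hv2⟩ := hvalley
  obtain ⟨t, ht⟩ : ∃ t, upPos P i = t + 1 := ⟨upPos P i - 1, by omega⟩
  rw [ht] at hlen hQdef hret habove hmlen hv2 ⊢
  rw [Nat.add_sub_cancel] at hQdef hv2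
  have htlt : t < P.length := by omega
  have hPdef : P = P.take t ++ false ::
      ((P.drop (t + 1)).take m ++ P.drop (t + 1 + m)) := by
    rw [← List.drop_drop (i := m), List.take_append_drop]
    rw [List.getD_eq_getElem _ _ htlt] at hv2
    rw [← hv2, ← List.drop_eq_getElem_cons htlt, List.take_append_drop]
  have hmove : MovesDown P Q t m := by
    have h := movesDown_append (P.take t) ((P.drop (t + 1)).take m) (P.drop (t + 1 + m))
    rwa [← hPdef, ← hQdef, hlen, List.length_take, min_eq_left htlt.le] at h
  have habove' : ∀ k ≤ m, altitude δ P (t + 1) ≤ altitude δ P (t + 1 + k) := by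
    intro k hk
    rcases Nat.eq_zero_or_pos k with rfl | h0
    · exact le_rfl
    · rcases hk.lt_or_eq with hlt | rfl
      · exact (habove k h0 hlt).le
      · exact hret.ge
  have hcount : ∀ {j}, j ≤ n → j ≤ P.count true := fun hj => hP.1 ▸ hj
  refine ⟨fun j hj1 hj => ⟨fun hin => ?_, fun hout => ?_⟩,
    fun j hj1 hj => ⟨fun hend => ?_, fun hend => ?_⟩⟩
  · have := hmove.upPos_inside hj1 (hcount hj) hin.1 hin.2
    unfold hpos
    omega
  · rw [hpos, hpos, hmove.upPos_outside hj1 (hcount hj) hout]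
  · exact hmove.excLen_extended hδ hret habove' hj1 (hcount hj) hend
  · exact hmove.excLen_unchanged hδ hret habove' hj1 (hcount hj) hend
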